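/- (Multivariate Gaussian mechanism on singular values) Let r ≥ 1, let Δ > 0, let 0 < ε < 1 and 0 < δ < 1, and set σ = Δ·√(2·ln(1.25/δ))/ε. Let s, s' ∈ ℝ^r with Euclidean distance √(Σ_{i=1}^r (s_i − s'_i)²) ≤ Δ. Let μ be the product measure on ℝ^r whose i-th factor is the Gaussian measure N(s_i, σ²), and let ν be the product measure whose i-th factor is N(s'_i, σ²) (i.e., the distributions of s + g and s' + g where g has independent N(0, σ²) coordinates). Then for every measurable set S ⊆ ℝ^r, μ(S) ≤ e^ε · ν(S) + δ. -/

import Mathlib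

open MeasureTheory ProbabilityTheory

/-! Let `p`, `q` be the two Gaussian densities and `Λ = log (p / q)`. Since `1 - e⁻ᵗ ≤ eˡᵗ / 4` for
`l ≥ 1`, taking `t = Λ - ε` gives `p ≤ e^ε q + ¼ e^{-lε} e^{lΛ} p`. As `Λ` is affine, `e^{lΛ} p` is,
up to the constant `exp (l (l + 1) ‖s - s'‖² / (2σ²))`, again a Gaussian density, now centered at
`s + l (s - s')`. Hence `μ ≤ e^ε ν + ¼ exp (l (l + 1) ‖s - s'‖² / (2σ²) - lε)` on every set, and it
remains to choose `l`. -/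

lemma withDensity_ofReal_le_smul_add_smul {α : Type*} [MeasurableSpace α] {μ : Measure α}
    {f g h : α → ℝ} {a b : ℝ} (ha : 0 ≤ a) (hb : 0 ≤ b) (hg : Measurable g)
    (hfgh : ∀ x, f x ≤ a * g x + b * h x) :
    μ.withDensity (fun x => ENNReal.ofReal (f x)) ≤
      ENNReal.ofReal a • μ.withDensity (fun x => ENNReal.ofReal (g x)) +
        ENNReal.ofReal b • μ.withDensity (fun x => ENNReal.ofReal (h x)) := by
  rw [← withDensity_smul' _ _ ENNReal.ofReal_ne_top, ← withDensity_smul' _ _ ENNReal.ofReal_ne_top,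
    ← withDensity_add_left (hg.ennreal_ofReal.const_smul _)]
  refine withDensity_mono (.of_forall fun x => ?_)
  simp only [Pi.add_apply, Pi.smul_apply, smul_eq_mul]
  rw [← ENNReal.ofReal_mul ha, ← ENNReal.ofReal_mul hb]
  exact (ENNReal.ofReal_le_ofReal (hfgh x)).trans ENNReal.ofReal_add_le

lemma pi_withDensity_ofReal {ι : Type*} [Fintype ι] {X : ι → Type*} [∀ i, MeasurableSpace (X i)]
    (μ : ∀ i, Measure (X i)) [∀ i, SigmaFinite (μ i)] {f : ∀ i, X i → ℝ}
    (hf : ∀ i, Integrable (f i) (μ i)) (hf0 : ∀ i, 0 ≤ f i) :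
    Measure.pi (fun i => (μ i).withDensity fun x => ENNReal.ofReal (f i x)) =
      (Measure.pi μ).withDensity fun x => ENNReal.ofReal (∏ i, f i (x i)) := by
  refine Measure.pi_eq fun B hB => ?_
  have h_integrable : Integrable (fun x => ∏ i, f i (x i))
      (Measure.pi fun i => (μ i).restrict (B i)) :=
    Integrable.fintype_prod_dep fun i => (hf i).restrict
  calc (Measure.pi μ).withDensity (fun x => ENNReal.ofReal (∏ i, f i (x i))) (Set.univ.pi B)
      = ∫⁻ x, ENNReal.ofReal (∏ i, f i (x i)) ∂Measure.pi fun i => (μ i).restrict (B i) := by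
        rw [withDensity_apply _ (.univ_pi hB), Measure.restrict_pi_pi]
    _ = ENNReal.ofReal (∏ i, ∫ x in B i, f i x ∂μ i) := by
        rw [← ofReal_integral_eq_lintegral_ofReal h_integrable
          (.of_forall fun x => Finset.prod_nonneg fun i _ => hf0 i (x i)),
          integral_fintype_prod_eq_prod f]
    _ = ∏ i, ENNReal.ofReal (∫ x in B i, f i x ∂μ i) :=
        ENNReal.ofReal_prod_of_nonneg fun i _ => integral_nonneg (hf0 i)
    _ = ∏ i, (μ i).withDensity (fun x => ENNReal.ofReal (f i x)) (B i) := by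
        refine Finset.prod_congr rfl fun i _ => ?_
        rw [withDensity_apply _ (hB i), ofReal_integral_eq_lintegral_ofReal (hf i).restrict
          (.of_forall (hf0 i))]

lemma one_sub_exp_neg_le_exp_mul_div_four {l : ℝ} (hl : 1 ≤ l) (t : ℝ) :
    1 - Real.exp (-t) ≤ Real.exp (l * t) / 4 := by
  rcases le_total t 0 with ht | ht
  · have h_one_le : 1 ≤ Real.exp (-t) := Real.one_le_exp (neg_nonneg.2 ht)
    linarith [Real.exp_pos (l * t)]
  · calc 1 - Real.exp (-t)
        ≤ 1 - Real.exp (-t) + Real.exp (-t) * (Real.exp t / 2 - 1) ^ 2 :=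
          le_add_of_nonneg_right (by positivity)
      _ = Real.exp t / 4 := by rw [Real.exp_neg]; field_simp; ring
      _ ≤ Real.exp (l * t) / 4 := by gcongr; exact le_mul_of_one_le_left ht hl

section Gaussian

open scoped NNReal

variable {ι : Type*} [Fintype ι]

/-- The density on `ℝ^ι` of the Gaussian with mean `m` and covariance `v` times the identity. -/
noncomputable def isotropicGaussianPDF (m : ι → ℝ) (v : ℝ≥0) (x : ι → ℝ) : ℝ :=
  ∏ i, gaussianPDFReal (m i) v (x i)

/-- The privacy loss at outcome `x`: the log-likelihood ratio of the Gaussians with means `s` and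
`s'` and common variance `v` in each coordinate. -/
noncomputable def gaussianPrivacyLoss (s s' : ι → ℝ) (v : ℝ≥0) (x : ι → ℝ) : ℝ :=
  (∑ i, (x i - s' i) ^ 2 - ∑ i, (x i - s i) ^ 2) / (2 * v)

lemma isotropicGaussianPDF_eq (m : ι → ℝ) (v : ℝ≥0) (x : ι → ℝ) :
    isotropicGaussianPDF m v x =
      (√(2 * Real.pi * v))⁻¹ ^ Fintype.card ι * Real.exp (-(∑ i, (x i - m i) ^ 2) / (2 * v)) := by
  simp only [isotropicGaussianPDF, gaussianPDFReal, Finset.prod_mul_distrib, Finset.prod_const,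
    Finset.card_univ, ← Real.exp_sum, ← Finset.sum_div, Finset.sum_neg_distrib]

lemma isotropicGaussianPDF_nonneg (m : ι → ℝ) (v : ℝ≥0) (x : ι → ℝ) :
    0 ≤ isotropicGaussianPDF m v x :=
  Finset.prod_nonneg fun i _ => gaussianPDFReal_nonneg (m i) v (x i)

lemma measurable_isotropicGaussianPDF (m : ι → ℝ) (v : ℝ≥0) :
    Measurable (isotropicGaussianPDF m v) :=
  Finset.measurable_fun_prod _ fun i _ =>
    (measurable_gaussianPDFReal (m i) v).comp (measurable_pi_apply i)

lemma pi_gaussianReal_eq_withDensity (m : ι → ℝ) {v : ℝ≥0} (hv : v ≠ 0) :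
    Measure.pi (fun i => gaussianReal (m i) v) =
      volume.withDensity fun x => ENNReal.ofReal (isotropicGaussianPDF m v x) := by
  simp only [gaussianReal_of_var_ne_zero _ hv, gaussianPDF_def]
  exact pi_withDensity_ofReal (fun _ => volume) (fun i => integrable_gaussianPDFReal (m i) v)
    fun i => gaussianPDFReal_nonneg (m i) v

lemma sum_sq_sub_tilt (s s' x : ι → ℝ) (l : ℝ) :
    ∑ i, (x i - (s + l • (s - s')) i) ^ 2 =
      (1 + l) * ∑ i, (x i - s i) ^ 2 - l * ∑ i, (x i - s' i) ^ 2
        + l * (l + 1) * ∑ i, (s i - s' i) ^ 2 := by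
  simp only [Finset.mul_sum, ← Finset.sum_add_distrib, ← Finset.sum_sub_distrib, Pi.add_apply,
    Pi.smul_apply, Pi.sub_apply, smul_eq_mul]
  exact Finset.sum_congr rfl fun i _ => by ring

lemma exp_mul_gaussianPrivacyLoss_mul_isotropicGaussianPDF (s s' : ι → ℝ) (v : ℝ≥0) (l : ℝ)
    (x : ι → ℝ) :
    Real.exp (l * gaussianPrivacyLoss s s' v x) * isotropicGaussianPDF s v x =
      Real.exp (l * (l + 1) * ((∑ i, (s i - s' i) ^ 2) / (2 * v))) *
        isotropicGaussianPDF (s + l • (s - s')) v x := by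
  rw [isotropicGaussianPDF_eq, isotropicGaussianPDF_eq, mul_left_comm, ← Real.exp_add,
    mul_left_comm, ← Real.exp_add, sum_sq_sub_tilt, gaussianPrivacyLoss]
  ring_nf

lemma exp_neg_gaussianPrivacyLoss_mul_isotropicGaussianPDF (s s' : ι → ℝ) (v : ℝ≥0) (x : ι → ℝ) :
    Real.exp (-gaussianPrivacyLoss s s' v x) * isotropicGaussianPDF s v x =
      isotropicGaussianPDF s' v x := by
  simpa using exp_mul_gaussianPrivacyLoss_mul_isotropicGaussianPDF s s' v (-1) x

lemma isotropicGaussianPDF_le (s s' : ι → ℝ) (v : ℝ≥0) (ε : ℝ) {l : ℝ} (hl : 1 ≤ l) (x : ι → ℝ) :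
    isotropicGaussianPDF s v x ≤
      Real.exp ε * isotropicGaussianPDF s' v x +
        Real.exp (l * (l + 1) * ((∑ i, (s i - s' i) ^ 2) / (2 * v)) - l * ε) / 4 *
          isotropicGaussianPDF (s + l • (s - s')) v x := by
  set Λ := gaussianPrivacyLoss s s' v x
  set p := isotropicGaussianPDF s v x
  have h_tail : (1 - Real.exp (-(Λ - ε))) * p ≤ Real.exp (l * (Λ - ε)) / 4 * p :=
    mul_le_mul_of_nonneg_right (one_sub_exp_neg_le_exp_mul_div_four hl _)
      (isotropicGaussianPDF_nonneg s v x)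
  calc p ≤ Real.exp (-(Λ - ε)) * p + Real.exp (l * (Λ - ε)) / 4 * p := by linarith
    _ = Real.exp ε * (Real.exp (-Λ) * p) + Real.exp (-(l * ε)) / 4 * (Real.exp (l * Λ) * p) := by
      rw [neg_sub, mul_sub, sub_eq_add_neg ε, sub_eq_neg_add (l * Λ), Real.exp_add, Real.exp_add]
      ring
    _ = _ := by
      rw [exp_neg_gaussianPrivacyLoss_mul_isotropicGaussianPDF,
        exp_mul_gaussianPrivacyLoss_mul_isotropicGaussianPDF, Real.exp_sub, Real.exp_neg]
      ring

lemma pi_gaussianReal_le (s s' : ι → ℝ) {v : ℝ≥0} (hv : v ≠ 0) (ε : ℝ) {l : ℝ} (hl : 1 ≤ l)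
    (S : Set (ι → ℝ)) :
    Measure.pi (fun i => gaussianReal (s i) v) S ≤
      ENNReal.ofReal (Real.exp ε) * Measure.pi (fun i => gaussianReal (s' i) v) S +
        ENNReal.ofReal
          (Real.exp (l * (l + 1) * ((∑ i, (s i - s' i) ^ 2) / (2 * v)) - l * ε) / 4) := by
  set c := Real.exp (l * (l + 1) * ((∑ i, (s i - s' i) ^ 2) / (2 * v)) - l * ε) / 4
  have h_le : Measure.pi (fun i => gaussianReal (s i) v) ≤
      ENNReal.ofReal (Real.exp ε) • Measure.pi (fun i => gaussianReal (s' i) v) +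
        ENNReal.ofReal c • Measure.pi (fun i => gaussianReal ((s + l • (s - s')) i) v) := by
    simp only [pi_gaussianReal_eq_withDensity _ hv]
    exact withDensity_ofReal_le_smul_add_smul (Real.exp_pos ε).le (by positivity)
      (measurable_isotropicGaussianPDF s' v) (isotropicGaussianPDF_le s s' v ε hl)
  refine (h_le S).trans ?_
  simp only [Measure.add_apply, Measure.smul_apply, smul_eq_mul]
  gcongr
  exact mul_le_of_le_one_right' prob_le_one

end Gaussian

lemma log_five_fourths_gt : 2 / 9 < Real.log 1.25 := by
  have h_split : Real.log 1.25 = Real.log 5 - 2 * Real.log 2 := by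
    rw [show (1.25 : ℝ) = 5 / 2 ^ 2 by norm_num, Real.log_div (by norm_num) (by norm_num),
      Real.log_pow, Nat.cast_ofNat]
  linarith [Real.log_five_gt_d9, Real.log_two_lt_d9]

-- `l = 2 L / ε - 1 / 2` minimizes the left-hand side; the endpoint `l = 1` serves when it is `< 1`.
lemma exists_one_le_tilt_exponent_le {ε L : ℝ} (hε0 : 0 < ε) (hε1 : ε ≤ 1) (hL : 2 / 9 ≤ L) :
    ∃ l : ℝ, 1 ≤ l ∧ l * (l + 1) * (ε ^ 2 / (4 * L)) - l * ε ≤ Real.log 5 - L := by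
  have hL0 : 0 < L := by linarith
  have h_log_five : 1.6 ≤ Real.log 5 := by linarith [Real.log_five_gt_d9]
  rcases le_total (3 / 4 * ε) L with h | h
  · refine ⟨2 * L / ε - 1 / 2, ?_, ?_⟩
    · have h_ratio : 3 / 2 ≤ 2 * L / ε := by rw [le_div_iff₀ hε0]; linarith
      linarith
    · have h_min : (2 * L / ε - 1 / 2) * (2 * L / ε - 1 / 2 + 1) * (ε ^ 2 / (4 * L)) -
          (2 * L / ε - 1 / 2) * ε = ε / 2 - L - ε ^ 2 / (16 * L) := by
        field_simp
        ring
      have h_sq : 0 ≤ ε ^ 2 / (16 * L) := by positivity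
      linarith
  · refine ⟨1, le_rfl, ?_⟩
    have h_endpoint : ε ^ 2 / (2 * L) ≤ 1.6 + ε - L := by
      rw [div_le_iff₀ (by positivity)]
      nlinarith [mul_nonneg (sub_nonneg.2 hL) (sub_nonneg.2 h), mul_pos hε0 hε0]
    calc 1 * (1 + 1) * (ε ^ 2 / (4 * L)) - 1 * ε = ε ^ 2 / (2 * L) - ε := by field_simp; ring
      _ ≤ Real.log 5 - L := by linarith

lemma exists_one_le_exp_tilt_le {ε δ q : ℝ} (hε0 : 0 < ε) (hε1 : ε ≤ 1) (hδ0 : 0 < δ)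
    (hδ1 : δ ≤ 1) (hq : q ≤ ε ^ 2 / (4 * Real.log (1.25 / δ))) :
    ∃ l : ℝ, 1 ≤ l ∧ Real.exp (l * (l + 1) * q - l * ε) / 4 ≤ δ := by
  have h_log : 2 / 9 ≤ Real.log (1.25 / δ) :=
    log_five_fourths_gt.le.trans
      (Real.log_le_log (by norm_num) (le_div_self (by norm_num) hδ0 hδ1))
  obtain ⟨l, hl, h_exponent⟩ := exists_one_le_tilt_exponent_le hε0 hε1 h_log
  refine ⟨l, hl, ?_⟩
  calc Real.exp (l * (l + 1) * q - l * ε) / 4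
      ≤ Real.exp (l * (l + 1) * (ε ^ 2 / (4 * Real.log (1.25 / δ))) - l * ε) / 4 := by gcongr
    _ ≤ Real.exp (Real.log 5 - Real.log (1.25 / δ)) / 4 := by gcongr
    _ = δ := by
      rw [Real.exp_sub, Real.exp_log (by norm_num), Real.exp_log (by positivity)]
      field_simp
      norm_num

lemma div_two_mul_sq_le_of_noise_scale_le {D Δ ε L σ : ℝ} (hΔ : 0 < Δ) (hε : 0 < ε) (hL : 0 < L)
    (hD : √D ≤ Δ) (hσ : Δ * √(2 * L) / ε ≤ σ) :
    D / (2 * σ ^ 2) ≤ ε ^ 2 / (4 * L) := by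
  calc D / (2 * σ ^ 2) ≤ Δ ^ 2 / (2 * (Δ * √(2 * L) / ε) ^ 2) := by
        gcongr
        exact (Real.sqrt_le_left hΔ.le).1 hD
    _ = ε ^ 2 / (4 * L) := by
        rw [div_pow, mul_pow, Real.sq_sqrt (by positivity)]
        field_simp
        norm_num

theorem gaussian_mechanism_multivariate_general {ι : Type*} [Fintype ι] {Δ ε δ σ : ℝ}
    (hΔ : 0 < Δ) (hε0 : 0 < ε) (hε1 : ε ≤ 1) (hδ0 : 0 < δ) (hδ1 : δ ≤ 1)
    (hσ : Δ * √(2 * Real.log (1.25 / δ)) / ε ≤ σ) {s s' : ι → ℝ}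
    (hss' : √(∑ i, (s i - s' i) ^ 2) ≤ Δ) (S : Set (ι → ℝ)) :
    Measure.pi (fun i => gaussianReal (s i) (Real.toNNReal (σ ^ 2))) S
      ≤ ENNReal.ofReal (Real.exp ε)
          * Measure.pi (fun i => gaussianReal (s' i) (Real.toNNReal (σ ^ 2))) S
        + ENNReal.ofReal δ := by
  have h_log : 0 < Real.log (1.25 / δ) :=
    Real.log_pos ((one_lt_div hδ0).2 (by linarith))
  have hσ0 : 0 < σ := lt_of_lt_of_le (by positivity) hσ
  have hv : Real.toNNReal (σ ^ 2) ≠ 0 := (Real.toNNReal_pos.2 (by positivity)).ne'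
  have h_ratio : (∑ i, (s i - s' i) ^ 2) / (2 * (Real.toNNReal (σ ^ 2) : ℝ)) ≤
      ε ^ 2 / (4 * Real.log (1.25 / δ)) := by
    rw [Real.coe_toNNReal _ (sq_nonneg σ)]
    exact div_two_mul_sq_le_of_noise_scale_le hΔ hε0 h_log hss' hσ
  obtain ⟨l, hl, h_tilt⟩ := exists_one_le_exp_tilt_le hε0 hε1 hδ0 hδ1 h_ratio
  exact (pi_gaussianReal_le s s' hv ε hl S).trans (by gcongr)

/-- **multivariate Gaussian mechanism on singular values.** With
`σ = Δ·√(2·ln(1.25/δ))/ε` and `‖s − s'‖₂ ≤ Δ`, the product Gaussian measures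
centered at `s` and `s'` with coordinate variance `σ²` are
`(ε, δ)`-indistinguishable. -/
theorem gaussian_mechanism_multivariate (r : ℕ) (hr : 1 ≤ r)
    (Δ ε δ : ℝ)
    (hΔ : 0 < Δ) (hε0 : 0 < ε) (hε1 : ε < 1) (hδ0 : 0 < δ) (hδ1 : δ < 1)
    (σ : ℝ) (hσ : σ = Δ * Real.sqrt (2 * Real.log (1.25 / δ)) / ε)
    (s s' : Fin r → ℝ)
    (hss' : Real.sqrt (∑ i : Fin r, (s i - s' i) ^ 2) ≤ Δ)
    (S : Set (Fin r → ℝ)) (hS : MeasurableSet S) :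
    Measure.pi (fun i => gaussianReal (s i) (Real.toNNReal (σ ^ 2))) S
      ≤ ENNReal.ofReal (Real.exp ε)
          * Measure.pi (fun i => gaussianReal (s' i) (Real.toNNReal (σ ^ 2))) S
        + ENNReal.ofReal δ :=
  gaussian_mechanism_multivariate_general hΔ hε0 hε1.le hδ0 hδ1.le hσ.ge hss' S
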